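/- Let k ≥ 0 be an integer. The set of functions f : 𝔻̄ → ℂ that are continuous on the closed unit disc, holomorphic on the open unit disc, and satisfy the index-k boundary condition is a real vector space (under pointwise addition and real scalar multiplication) of real dimension exactly 2k + 1. -/

import Mathlib

/-!
The dimension is computed by induction on `k`.

For `k = 0` the functions in question are real on the unit circle, and such a function is a real
constant. Indeed, the maximum principle applied to `exp (± i f)`, whose modulus is `exp (∓ Im f)`,
shows that `Im f = 0` on the whole disc; then `(f - f 0 + i)⁻¹` has maximal modulus at the centre,
so it is constant (`eqOn_const_of_real_on_sphere`).

For the step, `(g, c) ↦ z g + c + c̄ z ^ (2k + 2)` is an `ℝ`-linear bijection from `V_k × ℂ` onto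
`V_{k+1}`: the number `c` is the value at `0`, and a function of index `k + 1` vanishing at `0` is
`z` times a function of index `k`. Each step therefore adds two real dimensions.
-/

open Metric Complex ComplexConjugate

/-- The real vector space of functions on the closed unit disc which are continuous, holomorphic
in the interior and satisfy the index-`k` boundary condition. -/
def indexSpace (k : ℕ) : Submodule ℝ (closedBall (0 : ℂ) 1 → ℂ) where
  carrier := {g | ∃ f : ℂ → ℂ,
    ContinuousOn f (closedBall (0 : ℂ) 1) ∧
    DifferentiableOn ℂ f (ball (0 : ℂ) 1) ∧
    (∀ ζ ∈ sphere (0 : ℂ) 1, ∃ r : ℝ, f ζ = (r : ℂ) * ζ ^ k) ∧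
    g = fun z : closedBall (0 : ℂ) 1 => f ↑z}
  add_mem' := by
    rintro _ _ ⟨f, hc, hd, hb, rfl⟩ ⟨f', hc', hd', hb', rfl⟩
    refine ⟨fun z => f z + f' z, hc.add hc', hd.add hd', fun ζ hζ => ?_, rfl⟩
    obtain ⟨r, hr⟩ := hb ζ hζ
    obtain ⟨r', hr'⟩ := hb' ζ hζ
    exact ⟨r + r', by simp only [hr, hr']; push_cast; ring⟩
  zero_mem' := ⟨fun _ => 0, continuousOn_const, differentiableOn_const _,
    fun _ _ => ⟨0, by simp⟩, rfl⟩
  smul_mem' := by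
    rintro a _ ⟨f, hc, hd, hb, rfl⟩
    refine ⟨fun z => (a : ℂ) * f z, continuousOn_const.mul hc, hd.const_mul _, fun ζ hζ => ?_, ?_⟩
    · obtain ⟨r, hr⟩ := hb ζ hζ
      exact ⟨a * r, by simp only [hr]; push_cast; ring⟩
    · ext z
      simp

/-- One half of the maximum principle for `Im f`; the other half is obtained from `-f`. -/
lemma im_nonneg_of_real_on_sphere {f : ℂ → ℂ} (hf : DiffContOnCl ℂ f (ball (0 : ℂ) 1))
    (hb : ∀ ζ ∈ sphere (0 : ℂ) 1, (f ζ).im = 0) {z : ℂ} (hz : z ∈ closedBall (0 : ℂ) 1) :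
    0 ≤ (f z).im := by
  have he : DiffContOnCl ℂ (fun z => exp (I * f z)) (ball (0 : ℂ) 1) :=
    differentiable_exp.comp_diffContOnCl (hf.const_smul I)
  have h := norm_le_of_forall_mem_frontier_norm_le (C := 1) isBounded_ball he
    (fun ζ hζ => by
      rw [frontier_ball _ one_ne_zero] at hζ
      simp [norm_exp, hb ζ hζ])
    (by rwa [closure_ball _ one_ne_zero])
  simpa [norm_exp] using h

lemma eqOn_const_of_real_on_sphere {f : ℂ → ℂ} (hf : DiffContOnCl ℂ f (ball (0 : ℂ) 1))
    (hb : ∀ ζ ∈ sphere (0 : ℂ) 1, (f ζ).im = 0) {z : ℂ} (hz : z ∈ closedBall (0 : ℂ) 1) :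
    f z = ((f 0).re : ℂ) := by
  have him : ∀ w ∈ closedBall (0 : ℂ) 1, (f w).im = 0 := fun w hw => by
    refine le_antisymm ?_ (im_nonneg_of_real_on_sphere hf hb hw)
    have := im_nonneg_of_real_on_sphere (f := fun z => -f z) hf.neg
      (fun ζ hζ => by simp [hb ζ hζ]) hw
    simpa using this
  have h0 : f 0 = ((f 0).re : ℂ) := by
    apply Complex.ext <;> simp [him 0 (by simp)]
  have hcl : closure (ball (0 : ℂ) 1) = closedBall 0 1 := closure_ball _ one_ne_zero
  have hne : ∀ w ∈ closure (ball (0 : ℂ) 1), f w - f 0 + I ≠ 0 := fun w hw h => by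
    have := congrArg im h
    rw [hcl] at hw
    simp [him w hw, him 0 (by simp)] at this
  have hd : DiffContOnCl ℂ (fun w => f w - f 0 + I)⁻¹ (ball (0 : ℂ) 1) :=
    ((hf.sub_const (f 0)).add_const I).inv hne
  -- Since `f - f 0` is real, `|f - f 0 + i| ≥ |i| = 1`, with equality at the centre.
  have hmax : IsMaxOn (norm ∘ (fun w => f w - f 0 + I)⁻¹) (ball (0 : ℂ) 1) 0 := by
    intro w hw
    have h1 : 1 ≤ ‖f w - f 0 + I‖ := by
      have := abs_im_le_norm (f w - f 0 + I)
      simpa [him w (ball_subset_closedBall hw), him 0 (by simp)] using this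
    simpa using inv_le_one_of_one_le₀ h1
  have := eqOn_closure_of_isPreconnected_of_isMaxOn_norm (convex_ball _ _).isPreconnected
    isOpen_ball hd (by simp) hmax (hcl ▸ hz)
  have hinv : f z - f 0 + I = f 0 - f 0 + I := inv_injective this
  rw [← h0]
  linear_combination hinv

lemma finrank_indexSpace_zero : Module.finrank ℝ (indexSpace 0) = 1 := by
  have h : indexSpace 0 = Submodule.span ℝ {fun _ => 1} := by
    apply le_antisymm
    · rintro _ ⟨f, hc, hd, hb, rfl⟩
      have hf : DiffContOnCl ℂ f (ball (0 : ℂ) 1) := ⟨hd, by rwa [closure_ball _ one_ne_zero]⟩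
      refine Submodule.mem_span_singleton.2 ⟨(f 0).re, ?_⟩
      ext z
      rw [eqOn_const_of_real_on_sphere hf (fun ζ hζ => ?_) z.2]
      · simp
      · obtain ⟨r, hr⟩ := hb ζ hζ
        simp [hr]
    · rw [Submodule.span_singleton_le_iff_mem]
      exact ⟨fun _ => 1, continuousOn_const, differentiableOn_const _,
        fun _ _ => ⟨1, by simp⟩, rfl⟩
  rw [h]
  refine finrank_span_singleton fun h => ?_
  simpa using congrFun h ⟨0, by simp⟩

/-- The map `(g, c) ↦ z g + c + c̄ z ^ (2k + 2)`, which carries `indexSpace k × ℂ` onto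
`indexSpace (k + 1)`. -/
def stepMap (k : ℕ) : (indexSpace k × ℂ) →ₗ[ℝ] (closedBall (0 : ℂ) 1 → ℂ) where
  toFun p z := z * p.1.1 z + (p.2 + conj p.2 * (z : ℂ) ^ (2 * k + 2))
  map_add' p q := by
    ext z
    simp
    ring
  map_smul' a p := by
    ext z
    simp
    ring

lemma mul_conj_of_mem_sphere {ζ : ℂ} (hζ : ζ ∈ sphere (0 : ℂ) 1) : ζ * conj ζ = 1 := by
  rw [mul_conj, normSq_eq_norm_sq, mem_sphere_zero_iff_norm.1 hζ]
  simp

/-- On the circle, `c + c̄ ζ ^ (2m) = 2 Re (c̄ ζ ^ m) ζ ^ m`. -/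
lemma add_conj_mul_pow_on_sphere (c : ℂ) (m : ℕ) {ζ : ℂ} (hζ : ζ ∈ sphere (0 : ℂ) 1) :
    c + conj c * ζ ^ (2 * m) = ((2 * (conj c * ζ ^ m).re : ℝ) : ℂ) * ζ ^ m := by
  have h1 : ζ ^ m * conj ζ ^ m = 1 := by
    rw [← mul_pow, mul_conj_of_mem_sphere hζ, one_pow]
  have h2 := add_conj (conj c * ζ ^ m)
  rw [← h2]
  simp only [map_mul, map_pow, conj_conj]
  linear_combination (-c) * h1

lemma stepMap_injective (k : ℕ) : Function.Injective (stepMap k) := by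
  rw [injective_iff_map_eq_zero]
  rintro ⟨⟨_, f, hc, hd, hb, rfl⟩, c⟩ h
  have hc0 : c = 0 := by
    simpa [stepMap] using congrFun h ⟨0, by simp⟩
  subst hc0
  have hz : ∀ z ∈ closedBall (0 : ℂ) 1, z ≠ 0 → f z = 0 := fun z hz hz0 => by
    simpa [stepMap, hz0] using congrFun h ⟨z, hz⟩
  -- The value at the centre is recovered from the punctured disc by continuity.
  have h0 : f 0 = 0 := by
    have hcont : ContinuousAt f 0 := hc.continuousAt (closedBall_mem_nhds _ one_pos)
    refine tendsto_nhds_unique (hcont.tendsto.mono_left nhdsWithin_le_nhds)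
      (tendsto_const_nhds.congr' ?_ : Filter.Tendsto f (nhdsWithin 0 {0}ᶜ) (nhds 0))
    filter_upwards [self_mem_nhdsWithin,
      mem_nhdsWithin_of_mem_nhds (closedBall_mem_nhds (0 : ℂ) one_pos)] with z hz0 hz1
    exact (hz z hz1 hz0).symm
  refine Prod.ext (Subtype.ext ?_) rfl
  ext z
  by_cases hz0 : (z : ℂ) = 0
  · simp [hz0, h0]
  · simpa using hz z z.2 hz0

lemma range_stepMap (k : ℕ) : LinearMap.range (stepMap k) = indexSpace (k + 1) := by
  apply le_antisymm
  · rintro _ ⟨⟨⟨_, f, hc, hd, hb, rfl⟩, c⟩, rfl⟩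
    refine ⟨fun z => z * f z + (c + conj c * z ^ (2 * k + 2)), by fun_prop, by fun_prop,
      fun ζ hζ => ?_, rfl⟩
    obtain ⟨r, hr⟩ := hb ζ hζ
    refine ⟨r + 2 * (conj c * ζ ^ (k + 1)).re, ?_⟩
    have := add_conj_mul_pow_on_sphere c (k + 1) hζ
    rw [mul_add, mul_one] at this
    simp only [this, hr]
    push_cast
    ring
  · rintro _ ⟨f, hc, hd, hb, rfl⟩
    set F : ℂ → ℂ := fun z => f z - (f 0 + conj (f 0) * z ^ (2 * k + 2)) with hF
    have hF0 : F 0 = 0 := by simp [hF]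
    have hFc : ContinuousOn F (closedBall 0 1) := by fun_prop
    have hFd : DifferentiableOn ℂ F (ball 0 1) := by fun_prop
    have hmul : ∀ z, z * dslope F 0 z = F z := fun z => by
      simpa [hF0] using sub_smul_dslope F 0 z
    have hG : (fun z : closedBall (0 : ℂ) 1 => dslope F 0 z) ∈ indexSpace k := by
      refine ⟨dslope F 0, ?_, ?_, fun ζ hζ => ?_, rfl⟩
      · exact (continuousOn_dslope (closedBall_mem_nhds _ one_pos)).2
          ⟨hFc, hFd.differentiableAt (ball_mem_nhds _ one_pos)⟩
      · exact (differentiableOn_dslope (ball_mem_nhds _ one_pos)).2 hFd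
      · obtain ⟨r, hr⟩ := hb ζ hζ
        have hζ0 : ζ ≠ 0 := ne_zero_of_mem_unit_sphere ⟨ζ, hζ⟩
        refine ⟨r - 2 * (conj (f 0) * ζ ^ (k + 1)).re, mul_left_cancel₀ hζ0 ?_⟩
        have := add_conj_mul_pow_on_sphere (f 0) (k + 1) hζ
        rw [mul_add, mul_one] at this
        rw [hmul, hF]
        simp only
        rw [this, hr]
        push_cast
        ring
    refine ⟨(⟨_, hG⟩, f 0), ?_⟩
    ext z
    change z * dslope F 0 z + (f 0 + conj (f 0) * (z : ℂ) ^ (2 * k + 2)) = f z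
    rw [hmul, hF]
    ring

lemma finrank_indexSpace (k : ℕ) : Module.finrank ℝ (indexSpace k) = 2 * k + 1 := by
  induction k with
  | zero => exact finrank_indexSpace_zero
  | succ k ih =>
    have : Module.Finite ℝ (indexSpace k) := Module.finite_of_finrank_pos (by omega)
    rw [← range_stepMap, LinearMap.finrank_range_of_inj (stepMap_injective k),
      Module.finrank_prod, ih, finrank_real_complex]
    ring


/-- The space of functions on the closed unit disc that are continuous, holomorphic on
the open disc, and satisfy the index-`k` boundary condition
(`f(ζ) ∈ ζ^k · ℝ` on the unit circle) is a real vector space of dimension `2k + 1`. -/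
theorem index_k_boundary_space_finrank (k : ℕ) :
    ∃ S : Submodule ℝ ((Metric.closedBall (0 : ℂ) 1) → ℂ),
      (S : Set ((Metric.closedBall (0 : ℂ) 1) → ℂ)) =
        {g : (Metric.closedBall (0 : ℂ) 1) → ℂ | ∃ f : ℂ → ℂ,
          ContinuousOn f (Metric.closedBall (0 : ℂ) 1) ∧
          DifferentiableOn ℂ f (Metric.ball (0 : ℂ) 1) ∧
          (∀ ζ ∈ Metric.sphere (0 : ℂ) 1, ∃ r : ℝ, f ζ = (r : ℂ) * ζ ^ k) ∧
          g = fun z : (Metric.closedBall (0 : ℂ) 1) => f ↑z} ∧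
      Module.finrank ℝ S = 2 * k + 1 := by
  exact ⟨indexSpace k, rfl, finrank_indexSpace k⟩
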